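/- arXiv:1806.10183 — 3 statements merged into one kernel-verified Lean document; each statement's English description precedes it below -/
import Mathlib

section
/- Fundamental Theorem of Traditional Reversible Computing: Let C_I and C_F be finite types and let O : C_I → C_F be a function (a deterministic computational operation). If O is non-entropy-ejecting, i.e. for every probability distribution P on C_I one has H(O_* P) = H(P), then O is injective. Equivalently, if O is not injective, then there exists a probability distribution P on C_I (an operating context) for which the ejected entropy H(P) - H(O_* P) is strictly positive. -/
open Finset

/-- Shannon entropy (in nats) of a probability distribution on a finite type. -/
noncomputable def entropy {σ : Type*} [Fintype σ] (p : σ → ℝ) : ℝ :=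
  ∑ s, Real.negMulLog (p s)

/-- Pushforward of a distribution along a map between finite types. -/
noncomputable def pushforward {σ γ : Type*} [Fintype σ] [DecidableEq γ]
    (f : σ → γ) (p : σ → ℝ) : γ → ℝ :=
  fun c => ∑ s ∈ Finset.univ.filter (fun s => f s = c), p s

/-!
By the chain rule the entropy ejected by `f` is the average of `log (f_* p (f s) / p s)`. The mass
of a fibre is at least that of each of its points, so no term of the average is negative, and a
term is positive as soon as two points of the support share a fibre.
-/

section Pushforward

variable {σ γ : Type*} [Fintype σ] [DecidableEq γ] {f : σ → γ} {p : σ → ℝ}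

lemma sum_pushforward_mul [Fintype γ] (f : σ → γ) (p : σ → ℝ) (g : γ → ℝ) :
    ∑ c, pushforward f p c * g c = ∑ s, p s * g (f s) := by
  simp only [pushforward, sum_mul, sum_filter, ite_mul, zero_mul]
  rw [sum_comm]
  simp only [sum_ite_eq, mem_univ, if_true]

lemma le_pushforward_apply (hp : ∀ s, 0 ≤ p s) (s : σ) : p s ≤ pushforward f p (f s) :=
  single_le_sum (fun t _ => hp t) (by simp)

lemma add_le_pushforward_apply (hp : ∀ s, 0 ≤ p s) {a b : σ} (hab : a ≠ b) (hf : f a = f b) :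
    p a + p b ≤ pushforward f p (f a) :=
  add_le_sum (fun t _ => hp t) (by simp) (by simp [hf]) hab

lemma entropy_sub_entropy_pushforward [Fintype γ] (f : σ → γ) (p : σ → ℝ) :
    entropy p - entropy (pushforward f p) =
      ∑ s, p s * (Real.log (pushforward f p (f s)) - Real.log (p s)) := by
  have chain := sum_pushforward_mul f p fun c => Real.log (pushforward f p c)
  simp only [entropy, Real.negMulLog, neg_mul, sum_neg_distrib, mul_sub, sum_sub_distrib, chain]
  ring

lemma entropy_pushforward_lt [Fintype γ] (hp : ∀ s, 0 ≤ p s)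
    (hf : ¬ Set.InjOn f (Function.support p)) :
    entropy (pushforward f p) < entropy p := by
  simp only [Set.InjOn, not_forall] at hf
  obtain ⟨a, ha, b, hb, hfab, hab⟩ := hf
  have pos {s : σ} (hs : p s ≠ 0) : 0 < p s := (hp s).lt_of_ne' hs
  have collision : p a < pushforward f p (f a) :=
    (lt_add_of_pos_right _ (pos hb)).trans_le (add_le_pushforward_apply hp hab hfab)
  rw [← sub_pos, entropy_sub_entropy_pushforward]
  refine sum_pos' (fun s _ => ?_) ⟨a, mem_univ a, ?_⟩
  · rcases eq_or_ne (p s) 0 with hs | hs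
    · rw [hs, zero_mul]
    · exact mul_nonneg (hp s) <| sub_nonneg.mpr <|
        Real.log_le_log (pos hs) (le_pushforward_apply hp s)
  · exact mul_pos (pos ha) (sub_pos.mpr (Real.log_lt_log (pos ha) collision))

end Pushforward

theorem traditional_reversible_computing_general
    {CI CF : Type*} [Fintype CI] [Fintype CF] [DecidableEq CF] (O : CI → CF) (P : CI → ℝ)
    (hP : ∀ c, 0 ≤ P c) (hne : entropy (pushforward O P) = entropy P) :
    Set.InjOn O (Function.support P) := by
  by_contra hO
  exact (entropy_pushforward_lt hP hO).ne hne

/-- Fundamental Theorem of Traditional Reversible Computing: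
a deterministic computational operation that is non-entropy-ejecting in every
operating context must be (unconditionally logically) reversible, i.e.
injective. -/
theorem traditional_reversible_computing
    {CI CF : Type*} [Fintype CI] [Fintype CF] [DecidableEq CF]
    (O : CI → CF)
    (hne : ∀ P : CI → ℝ, (∀ c, 0 ≤ P c) → (∑ c, P c = 1) →
      entropy (pushforward O P) = entropy P) :
    Function.Injective O := by
  intro a b hab
  have : Nonempty CI := ⟨a⟩
  exact traditional_reversible_computing_general O (fun _ => (Fintype.card CI : ℝ)⁻¹)
    (fun _ => by positivity) (hne _ (fun _ => by positivity) (by simp)) (by simp) (by simp) hab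
end

section
/- Fundamental Theorem of Generalized Reversible Computing, part (a): Let C_I and C_F be finite types, O : C_I → C_F a function, P a probability distribution on C_I, and A ⊆ C_I a subset on which O is injective. If the precondition A is satisfied with certainty, i.e. ∑_{c ∈ A} P c = 1, then the computation is non-entropy-ejecting: H(O_* P) = H(P). -/
open Finset

/-!
Nonnegativity forces a distribution that gives `A` all its mass to be supported in `A`. If `O` is
injective on the support, every atom of `P` is carried unchanged to an atom of the pushforward, and
the remaining outcomes have mass `0`. Entropy adds up a function of the masses that vanishes at
`0`, so it does not see the difference.
-/

section Pushforward

variable {σ γ : Type*} [Fintype σ] [DecidableEq γ] {f : σ → γ} {p : σ → ℝ}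

theorem pushforward_apply_of_injOn_support (hf : Set.InjOn f (Function.support p)) {s : σ}
    (hs : s ∈ Function.support p) : pushforward f p (f s) = p s := by
  refine sum_eq_single_of_mem s (by simp) fun t ht hts => ?_
  by_contra hpt
  exact hts (hf hpt hs (mem_filter.mp ht).2)

theorem support_pushforward_subset :
    Function.support (pushforward f p) ⊆ f '' Function.support p := by
  intro c hc
  obtain ⟨s, hs, hps⟩ := exists_ne_zero_of_sum_ne_zero hc
  exact ⟨s, hps, (mem_filter.mp hs).2⟩

theorem sum_comp_pushforward_of_injOn_support [Fintype γ] {M : Type*} [AddCommMonoid M]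
    {g : ℝ → M} (hg : g 0 = 0) (hf : Set.InjOn f (Function.support p)) :
    ∑ c, g (pushforward f p c) = ∑ s, g (p s) := by
  have sum_support : ∑ s with p s ≠ 0, g (p s) = ∑ s, g (p s) :=
    sum_filter_of_ne fun s _ hgs hps => hgs (by rw [hps, hg])
  have eq_zero_off_image : ∀ c ∉ f '' Function.support p, g (pushforward f p c) = 0 := by
    intro c hc
    rw [Function.notMem_support.mp fun hpc => hc (support_pushforward_subset hpc), hg]
  rw [← sum_support]
  symm
  refine sum_of_injOn f (by rwa [coe_filter_univ]) (fun _ _ => mem_univ _) ?_ ?_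
  · intro c _ hc
    exact eq_zero_off_image c (by rwa [coe_filter_univ] at hc)
  · intro s hs
    rw [pushforward_apply_of_injOn_support hf (mem_filter.mp hs).2]

theorem entropy_pushforward_of_injOn_support [Fintype γ]
    (hf : Set.InjOn f (Function.support p)) : entropy (pushforward f p) = entropy p :=
  sum_comp_pushforward_of_injOn_support Real.negMulLog_zero hf

end Pushforward

theorem support_subset_of_sum_eq_sum_univ {ι M : Type*} [Fintype ι] [AddCommMonoid M]
    [PartialOrder M] [IsOrderedCancelAddMonoid M] {p : ι → M} {A : Finset ι}
    (hp : ∀ i, 0 ≤ p i) (hA : ∑ i ∈ A, p i = ∑ i, p i) : Function.support p ⊆ A := by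
  intro i hpi
  by_contra hiA
  have sum_lt : ∑ j ∈ A, p j < ∑ j, p j :=
    sum_lt_sum_of_subset (subset_univ A) (mem_univ i) hiA ((hp i).lt_of_ne' hpi)
      fun j _ _ => hp j
  exact sum_lt.ne hA

/-- Fundamental Theorem of Generalized Reversible Computing, part (a):
if some precondition `A` for reversibility of `O` is satisfied with certainty
in the operating context `P`, then the computation `(O, P)` is
non-entropy-ejecting. -/
theorem grc_part_a
    {CI CF : Type*} [Fintype CI] [Fintype CF] [DecidableEq CF]
    (O : CI → CF) (P : CI → ℝ) (A : Finset CI)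
    (hP : ∀ c, 0 ≤ P c) (hsum : ∑ c, P c = 1)
    (hinj : Set.InjOn O ↑A)
    (hcert : ∑ c ∈ A, P c = 1) :
    entropy (pushforward O P) = entropy P := by
  have support_subset : Function.support P ⊆ A :=
    support_subset_of_sum_eq_sum_univ hP (hcert.trans hsum.symm)
  exact entropy_pushforward_of_injOn_support (hinj.mono support_subset)
end

section
/- Fundamental Theorem of Generalized Reversible Computing, part (b): Let C_I and C_F be finite types, O : C_I → C_F a function, and P a probability distribution on C_I. If there exist two distinct initial states c₁ ≠ c₂ with P c₁ > 0, P c₂ > 0, and O c₁ = O c₂ (equivalently, O is not injective on the support {c | P c > 0}, so no precondition for reversibility of O is satisfied with certainty), then the computation is entropy-ejecting: H(O_* P) < H(P). -/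
open Finset

/-!
Merging states into one outcome can only lower the surprisal `-log` of each of them, since an
outcome weighs at least as much as any state it contains. Averaged over a fibre, this says that
`negMulLog` is subadditive, strictly so once two of the merged weights are positive; summing over
all fibres compares the entropies.
-/

lemma neg_mul_log_le_negMulLog {x y : ℝ} (hx : 0 ≤ x) (hxy : x ≤ y) :
    -x * Real.log y ≤ Real.negMulLog x := by
  rcases hx.eq_or_lt with rfl | hx_pos
  · simp
  · exact mul_le_mul_of_nonpos_left (Real.log_le_log hx_pos hxy) (neg_nonpos.mpr hx)

lemma neg_mul_log_lt_negMulLog {x y : ℝ} (hx : 0 < x) (hxy : x < y) :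
    -x * Real.log y < Real.negMulLog x :=
  mul_lt_mul_of_neg_left (Real.log_lt_log hx hxy) (neg_lt_zero.mpr hx)

section Subadditivity

variable {ι : Type*} {s : Finset ι} {p : ι → ℝ}

variable (s p) in
lemma negMulLog_sum :
    Real.negMulLog (∑ i ∈ s, p i) = ∑ i ∈ s, -p i * Real.log (∑ j ∈ s, p j) := by
  rw [← sum_mul, sum_neg_distrib, Real.negMulLog]

theorem negMulLog_sum_le_sum_negMulLog (hp : ∀ i ∈ s, 0 ≤ p i) :
    Real.negMulLog (∑ i ∈ s, p i) ≤ ∑ i ∈ s, Real.negMulLog (p i) := by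
  rw [negMulLog_sum]
  exact sum_le_sum fun i hi ↦ neg_mul_log_le_negMulLog (hp i hi) (single_le_sum hp hi)

theorem negMulLog_sum_lt_sum_negMulLog (hp : ∀ i ∈ s, 0 ≤ p i) {i j : ι} (hi : i ∈ s) (hj : j ∈ s)
    (hij : i ≠ j) (hpi : 0 < p i) (hpj : 0 < p j) :
    Real.negMulLog (∑ k ∈ s, p k) < ∑ k ∈ s, Real.negMulLog (p k) := by
  have hlt : p i < ∑ k ∈ s, p k := single_lt_sum hij.symm hi hj hpj fun k hk _ ↦ hp k hk
  rw [negMulLog_sum]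
  exact sum_lt_sum (fun k hk ↦ neg_mul_log_le_negMulLog (hp k hk) (single_le_sum hp hk))
    ⟨i, hi, neg_mul_log_lt_negMulLog hpi hlt⟩

end Subadditivity

theorem grc_part_b_general {σ γ : Type*} [Fintype σ] [Fintype γ] [DecidableEq γ]
    (f : σ → γ) (p : σ → ℝ) (hp : ∀ s, 0 ≤ p s) {s t : σ} (hst : s ≠ t)
    (hs : 0 < p s) (ht : 0 < p t) (hf : f s = f t) :
    entropy (pushforward f p) < entropy p := by
  have fiber_le (c : γ) :
      Real.negMulLog (∑ u with f u = c, p u) ≤ ∑ u with f u = c, Real.negMulLog (p u) :=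
    negMulLog_sum_le_sum_negMulLog fun u _ ↦ hp u
  have fiber_lt :
      Real.negMulLog (∑ u with f u = f s, p u) < ∑ u with f u = f s, Real.negMulLog (p u) :=
    negMulLog_sum_lt_sum_negMulLog (fun u _ ↦ hp u) (by simp) (by simp [hf]) hst hs ht
  calc entropy (pushforward f p)
      = ∑ c, Real.negMulLog (∑ u with f u = c, p u) := rfl
    _ < ∑ c, ∑ u with f u = c, Real.negMulLog (p u) :=
        sum_lt_sum (fun c _ ↦ fiber_le c) ⟨f s, mem_univ _, fiber_lt⟩
    _ = entropy p := sum_fiberwise univ f _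

/-- Fundamental Theorem of Generalized Reversible Computing, part (b):
if two distinct initial states of nonzero probability are merged by `O`,
then the computation `(O, P)` is entropy-ejecting. -/
theorem grc_part_b
    {CI CF : Type*} [Fintype CI] [Fintype CF] [DecidableEq CF]
    (O : CI → CF) (P : CI → ℝ)
    (hP : ∀ c, 0 ≤ P c) (hsum : ∑ c, P c = 1)
    (c₁ c₂ : CI) (hne : c₁ ≠ c₂)
    (h₁ : 0 < P c₁) (h₂ : 0 < P c₂) (hmerge : O c₁ = O c₂) :
    entropy (pushforward O P) < entropy P :=
  grc_part_b_general O P hP hne h₁ h₂ hmerge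
end
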